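/- In the semi-primitive cyclotomic setting, let T_0, T_1 be arbitrary (q−1)/2-subsets of F_q, and define S_1' = {x ∈ F_{q²} : Tr_{q²/q}(xω^m) ∈ F_q \ T_1}, A_0' = S_0 \ S_1', A_1' = S_1' \ S_0. Define C_0 = {(x,xy) : x ∈ D_0, y ∈ A_0} ∪ {(x,xy) : x ∈ D_1, y ∈ A_1} ∪ {(0,x) : x ∈ D_ε}, C_1 = {(x,xy) : x ∈ D_0, y ∈ A_0'} ∪ {(x,xy) : x ∈ D_1, y ∈ A_1'}, C_2 = {(x,xy) : x ∈ D_1, y ∈ A_0} ∪ {(x,xy) : x ∈ D_0, y ∈ A_1} ∪ {(0,x) : x ∈ D_{ε+1}} (subscript of D_{ε+1} mod 2), C_3 = {(x,xy) : x ∈ D_1, y ∈ A_0'} ∪ {(x,xy) : x ∈ D_0, y ∈ A_1'}. Then each C_i (i = 0,1,2,3) is of type Q, and with K_y = {(x,xy) : x ∈ F_{q²}} for y ∈ F_{q²} and K_∞ = {(0,x) : x ∈ F_{q²}} one has C_0 ∪ C_2 ∪ {(0,0)} = (∪_{y ∈ A_0∪A_1} K_y) ∪ K_∞ and C_1 ∪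 C_3 ∪ {(0,0)} = ∪_{y ∈ A_0'∪A_1'} K_y. -/

import Mathlib

noncomputable section

def zetaP (p : ℕ) : ℂ := Complex.exp (2 * Real.pi * Complex.I / p)

/-- The canonical additive character `ψ(x) = ζ_p^{Tr_{L/F_p}(x)}`. -/
def psiL (p : ℕ) (L : Type) [Field L] [Fintype L] [CharP L p] (x : L) : ℂ :=
  letI : Algebra (ZMod p) L := ZMod.algebra L p
  zetaP p ^ (Algebra.trace (ZMod p) L x).val

/-- `ψ_{a,b}(E) = Σ_{(x,y)∈E} ψ(ax+by)`. -/
def psiSum (p : ℕ) (L : Type) [Field L] [Fintype L] [CharP L p]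
    (a b : L) (E : Set (L × L)) : ℂ :=
  ∑ᶠ z ∈ E, psiL p L (a * z.1 + b * z.2)

/-- a subset of `F_{q²} × F_{q²}` of type Q. -/
def IsTypeQ (p q : ℕ) (L : Type) [Field L] [Fintype L] [CharP L p]
    (E : Set (L × L)) : Prop :=
  E.ncard = (q ^ 4 - 1) / 4 ∧
    ∀ a b : L, (a, b) ≠ ((0 : L), (0 : L)) →
      psiSum p L a b E = ((q : ℂ) ^ 2 - 1) / 4 ∨
      psiSum p L a b E = (-3 * (q : ℂ) ^ 2 - 1) / 4

/-- the cyclotomic class `C_i^{(N,q²)} = ω^i⟨ω^N⟩`. -/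
def cyc (L : Type) [Field L] (ω : L) (N i : ℕ) : Set L :=
  {x | ∃ k : ℕ, x = ω ^ i * (ω ^ N) ^ k}

/-- ω is a primitive element (generator of the multiplicative group). -/
def IsPrim (L : Type) [Field L] (ω : L) : Prop :=
  ∀ x : L, x ≠ 0 → ∃ n : ℕ, x = ω ^ n

/-!
Write `q = |K|` and `g = ω ^ m`. Multiplication by `g` swaps `D₀` and `D₁`, while multiplication by
`Kˣ` preserves them. The `Kˣ`-invariance makes the Gauss sums of the sign function `η` of
`(D₀, D₁)` degenerate: `∑ x, η x * ψ (x * z) = q * η (θ / z)`, where `θ = g ^ ((q + 1) / (2 * m))`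
has trace `0` over `K`. Moreover `g` lies outside `K`, so `y ↦ (Tr y, Tr (y * g))` is a bijection
from `L` onto `K × K`. The character sum at `(a, b)` of a union of sets `{(x, x * y)}` therefore
reduces to `|T₀|`, `|T₁|` and, for `b ≠ 0`, to the values of `η` and of the indicators of `S₀`, `S₁`
at `-a / b`; these leave only the two values of type Q. When `|T₀| = |T₁|` the sizes come out too
small, and the vertical part `D_ε` makes up the difference; `ε` records the parity of
`(q + 1) / (2 * m)`, which decides whether `θ` fixes or swaps `D₀` and `D₁`.
-/

section DualSums

variable {K V R : Type*} [Field K] [AddCommGroup V] [Module K V] {ℓ : Module.Dual K V} {θ : V}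

lemma exists_smul_eq_of_finrank_eq_two (hV : Module.finrank K V = 2) (hℓ : ℓ ≠ 0) (hθ : θ ≠ 0)
    (hℓθ : ℓ θ = 0) {x : V} (hx : ℓ x = 0) : ∃ k : K, k • θ = x := by
  have : FiniteDimensional K V := Module.finite_of_finrank_pos (by omega)
  have hker : Module.finrank K (LinearMap.ker ℓ) = 1 := by
    have := Module.Dual.finrank_ker_add_one_of_ne_zero hℓ
    omega
  obtain ⟨k, hk⟩ := (finrank_eq_one_iff_of_nonzero' (⟨θ, hℓθ⟩ : LinearMap.ker ℓ)
    (fun h => hθ (congrArg Subtype.val h))).1 hker ⟨x, hx⟩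
  exact ⟨k, congrArg Subtype.val hk⟩

lemma sum_fiber_of_smul_invariant [DecidableEq K] [Fintype V] [AddCommMonoid R]
    {η : V → R}
    (hη : ∀ k : K, k ≠ 0 → ∀ x, η (k • x) = η x) {k : K} (hk : k ≠ 0) :
    ∑ x with ℓ x = k, η x = ∑ x with ℓ x = 1, η x := by
  refine (Finset.sum_bij (fun x _ => k • x) (fun x hx => ?_) (fun _ _ _ _ h => ?_)
    (fun y hy => ⟨k⁻¹ • y, ?_, ?_⟩) (fun x _ => (hη k hk x).symm)).symm
  · simpa [hk] using hx
  · exact smul_right_injective V hk h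
  · have hy : ℓ y = k := by simpa using hy
    simp [hy, hk]
  · exact smul_inv_smul₀ hk y

variable [Fintype K] [Fintype V]

lemma sum_ker_of_smul_invariant [DecidableEq K] [CommRing R] (hV : Module.finrank K V = 2)
    (hℓ : ℓ ≠ 0) (hθ : θ ≠ 0) (hℓθ : ℓ θ = 0) {η : V → R} (h0 : η 0 = 0)
    (hη : ∀ k : K, k ≠ 0 → ∀ x, η (k • x) = η x) :
    ∑ x with ℓ x = 0, η x = (Fintype.card K - 1) * η θ := by
  calc ∑ x with ℓ x = 0, η x = ∑ k : K, η (k • θ) := by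
        refine (Finset.sum_bij (fun k _ => k • θ) (fun _ _ => ?_) (fun _ _ _ _ h => ?_)
          (fun x hx => ?_) (fun _ _ => rfl)).symm
        · simp [hℓθ]
        · exact smul_left_injective K hθ h
        · obtain ⟨k, hk⟩ := exists_smul_eq_of_finrank_eq_two hV hℓ hθ hℓθ
            (Finset.mem_filter.1 hx).2
          exact ⟨k, Finset.mem_univ k, hk⟩
    _ = ∑ _k ∈ Finset.univ.erase (0 : K), η θ := by
        rw [← Finset.add_sum_erase _ _ (Finset.mem_univ (0 : K)), zero_smul, h0, zero_add]
        exact Finset.sum_congr rfl fun k hk => hη k (Finset.ne_of_mem_erase hk) θ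
    _ = (Fintype.card K - 1) * η θ := by
        simp [Finset.card_erase_of_mem, Nat.cast_sub Fintype.card_pos]

/-- All fibres of `ℓ` over nonzero values carry the same share of `∑ η = 0`, and the fibre over
`0` is the line spanned by `θ`. -/
lemma sum_dual_mul_of_smul_invariant [CommRing R] [IsDomain R] [CharZero R]
    (hV : Module.finrank K V = 2) (hℓ : ℓ ≠ 0) (hθ : θ ≠ 0) (hℓθ : ℓ θ = 0) {η : V → R}
    (h0 : η 0 = 0) (hη : ∀ k : K, k ≠ 0 → ∀ x, η (k • x) = η x) (hsum : ∑ x, η x = 0)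
    (f : K → R) :
    ∑ x, f (ℓ x) * η x = η θ * (Fintype.card K * f 0 - ∑ k, f k) := by
  classical
  have sum_fiberwise (f : K → R) : ∑ x, f (ℓ x) * η x =
      f 0 * ((Fintype.card K - 1) * η θ)
        + (∑ k ∈ Finset.univ.erase 0, f k) * ∑ x with ℓ x = 1, η x := by
    rw [← Finset.sum_fiberwise _ ℓ, ← Finset.add_sum_erase _ _ (Finset.mem_univ (0 : K)),
      Finset.sum_mul, ← sum_ker_of_smul_invariant hV hℓ hθ hℓθ h0 hη, Finset.mul_sum]
    congr 1
    · exact Finset.sum_congr rfl fun x hx => by rw [(Finset.mem_filter.1 hx).2]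
    · refine Finset.sum_congr rfl fun _ hk => ?_
      rw [← sum_fiber_of_smul_invariant hη (Finset.ne_of_mem_erase hk), Finset.mul_sum]
      exact Finset.sum_congr rfl fun x hx => by rw [(Finset.mem_filter.1 hx).2]
  have hq : (Fintype.card K : R) - 1 ≠ 0 := by
    rw [sub_ne_zero]
    exact_mod_cast Fintype.one_lt_card.ne'
  have hfiber : ∑ x with ℓ x = 1, η x = -η θ := by
    have h := sum_fiberwise 1
    simp only [Pi.one_apply, one_mul, hsum, Finset.sum_const, nsmul_eq_mul, mul_one,
      Finset.card_erase_of_mem (Finset.mem_univ _), Finset.card_univ,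
      Nat.cast_sub Fintype.card_pos, Nat.cast_one] at h
    exact mul_left_cancel₀ hq (by linear_combination -h)
  rw [sum_fiberwise, hfiber, ← Finset.add_sum_erase _ f (Finset.mem_univ 0)]
  ring

end DualSums

section Alternating

/-- A function on `L` that vanishes at `0`, is constant on every line `Kˣ x`, and changes sign
under multiplication by `g`; the sign of a union of half of the cyclotomic classes is one. -/
structure IsAlternating (K : Type*) {L R : Type*} [Field K] [Field L] [Algebra K L] [Ring R]
    (g : L) (η : L → R) : Prop where
  ne_zero : g ≠ 0
  map_zero : η 0 = 0
  map_smul : ∀ k : K, k ≠ 0 → ∀ x, η (k • x) = η x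
  map_mul_left : ∀ x, η (g * x) = -η x

variable {K L R : Type*} [Field K] [Field L] [Algebra K L] {g θ : L} {η : L → R}

namespace IsAlternating

lemma comp_mul_left [Ring R] (h : IsAlternating K g η) (c : L) :
    IsAlternating K g fun x => η (c * x) where
  ne_zero := h.ne_zero
  map_zero := by rw [mul_zero, h.map_zero]
  map_smul k hk x := by rw [mul_smul_comm, h.map_smul k hk]
  map_mul_left x := by rw [mul_left_comm, h.map_mul_left]

lemma comp_inv [Ring R] (h : IsAlternating K g η) :
    IsAlternating K g fun x => η x⁻¹ where
  ne_zero := h.ne_zero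
  map_zero := by rw [inv_zero, h.map_zero]
  map_smul k hk x := by rw [smul_inv₀, h.map_smul _ (inv_ne_zero hk)]
  map_mul_left x := by
    rw [← neg_eq_iff_eq_neg, ← h.map_mul_left, mul_inv, mul_inv_cancel_left₀ h.ne_zero]

lemma comp_const_div [Ring R] (h : IsAlternating K g η) (c : L) :
    IsAlternating K g fun x => η (c / x) := by
  simpa only [div_eq_mul_inv] using (h.comp_mul_left c).comp_inv

lemma sum_eq_zero [Fintype L] [CommRing R] [IsDomain R] [CharZero R] (h : IsAlternating K g η) :
    ∑ x, η x = 0 := by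
  refine self_eq_neg.1 ?_
  calc ∑ x, η x = ∑ x, η (g * x) := (Equiv.sum_comp (Equiv.mulLeft₀ g h.ne_zero) η).symm
    _ = -∑ x, η x := by simp only [h.map_mul_left, Finset.sum_neg_distrib]

variable [Fintype K] [Fintype L] [Algebra.IsQuadraticExtension K L]
  [CommRing R] [IsDomain R] [CharZero R]

lemma sum_trace_mul (h : IsAlternating K g η) (hθ : θ ≠ 0)
    (htr : Algebra.trace K L θ = 0) {z : L} (hz : z ≠ 0) (f : K → R) :
    ∑ x, f (Algebra.trace K L (x * z)) * η x =
      η (θ / z) * (Fintype.card K * f 0 - ∑ k, f k) := by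
  classical
  have : Module.Finite K L := Module.Finite.of_finite
  refine sum_dual_mul_of_smul_invariant (ℓ := Algebra.trace K L ∘ₗ LinearMap.mulRight K z)
    (Algebra.IsQuadraticExtension.finrank_eq_two K L) ?_ (div_ne_zero hθ hz)
    (by simp [hz, htr]) h.map_zero h.map_smul (h.sum_eq_zero) f
  intro h0
  refine Algebra.trace_ne_zero K L (LinearMap.ext fun x => ?_)
  simpa [hz] using LinearMap.congr_fun h0 (x / z)

lemma sum_trace_mul_affine (h : IsAlternating K g η) (hθ : θ ≠ 0)
    (htr : Algebra.trace K L θ = 0) {z : L} (hz : z ≠ 0) (f : K → R) (a : L) {b : L}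
    (hb : b ≠ 0) :
    ∑ y, f (Algebra.trace K L (y * z)) * η (a + b * y) =
      η (b * (θ / z)) *
        (Fintype.card K * f (Algebra.trace K L (-a / b * z)) - ∑ k, f k) := by
  set c := Algebra.trace K L (-a / b * z)
  have hshift := (h.comp_mul_left b).sum_trace_mul hθ htr hz fun k => f (c + k)
  have hf : ∑ k, f (c + k) = ∑ k, f k := Equiv.sum_comp (Equiv.addLeft c) f
  rw [add_zero, hf] at hshift
  rw [← hshift, ← Equiv.sum_comp (Equiv.addLeft (-a / b))]
  refine Finset.sum_congr rfl fun y _ => ?_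
  have : a + b * (-a / b + y) = b * y := by field_simp; ring
  rw [Equiv.coe_addLeft, add_mul, map_add, this]

/-- In the semi-primitive case the Gauss sum degenerates to `q` times a value of `η`; at `z = 0`
the junk value `θ / 0 = 0` makes both sides vanish. -/
lemma sum_mul_addChar_trace (h : IsAlternating K g η) (hθ : θ ≠ 0)
    (htr : Algebra.trace K L θ = 0) {φ : AddChar K R} (hφ : φ ≠ 1) (z : L) :
    ∑ x, η x * φ (Algebra.trace K L (x * z)) = Fintype.card K * η (θ / z) := by
  rcases eq_or_ne z 0 with rfl | hz
  · simp [h.map_zero, h.sum_eq_zero]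
  · simp only [mul_comm (η _)]
    rw [h.sum_trace_mul hθ htr hz, AddChar.map_zero_eq_one, AddChar.sum_eq_zero_of_ne_one hφ]
    ring

end IsAlternating

end Alternating

section CharFn

variable {α : Type*}

/-- The characteristic function of a set, with complex values. -/
def charFn (S : Set α) : α → ℂ := S.indicator 1

lemma charFn_of_mem {S : Set α} {x : α} (hx : x ∈ S) : charFn S x = 1 :=
  Set.indicator_of_mem hx 1

lemma charFn_of_notMem {S : Set α} {x : α} (hx : x ∉ S) : charFn S x = 0 :=
  Set.indicator_of_notMem hx 1

lemma charFn_eq_zero_or_one (S : Set α) (x : α) : charFn S x = 0 ∨ charFn S x = 1 :=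
  S.indicator_eq_zero_or_self 1 x

lemma charFn_sdiff (S S' : Set α) (x : α) :
    charFn (S \ S') x = charFn S x * (1 - charFn S' x) := by
  by_cases hx : x ∈ S <;> by_cases hx' : x ∈ S' <;> simp [charFn, hx, hx']

lemma sum_charFn [Fintype α] (S : Set α) : ∑ x, charFn S x = S.ncard := by
  classical
  simp only [charFn, Set.indicator_apply, Pi.one_apply, Finset.sum_boole, ← Set.ncard_coe_finset,
    Finset.coe_filter, Finset.mem_univ, true_and, Set.ofPred_mem_eq]

lemma finsum_mem_eq_sum_charFn_mul [Fintype α] (S : Set α) (F : α → ℂ) :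
    ∑ᶠ x ∈ S, F x = ∑ x, charFn S x * F x := by
  rw [finsum_mem_def, finsum_eq_sum_of_fintype]
  exact Finset.sum_congr rfl fun x _ => by by_cases hx : x ∈ S <;> simp [charFn, hx]

end CharFn

section SwapPartition

/-- The sets `D` and `D'` partition `Lˣ` into unions of `Kˣ`-orbits and are exchanged by
multiplication with `g`. In the paper `D = D₀`, `D' = D₁` and `g = ω ^ m`. -/
structure IsSwapPartition (K : Type*) {L : Type*} [Field K] [Field L] [Algebra K L] (g : L)
    (D D' : Set L) : Prop where
  union_eq : D ∪ D' = {0}ᶜ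
  disjoint : Disjoint D D'
  smul_mem_left : ∀ k : K, k ≠ 0 → ∀ x ∈ D, k • x ∈ D
  smul_mem_right : ∀ k : K, k ≠ 0 → ∀ x ∈ D', k • x ∈ D'
  mul_mem_right : ∀ x ∈ D, g * x ∈ D'
  mul_mem_left : ∀ x ∈ D', g * x ∈ D

/-- The function that is `1` on `D`, `-1` on `D'` and `0` elsewhere, for disjoint `D`, `D'`. -/
def signOf {L : Type*} (D D' : Set L) : L → ℂ := charFn D - charFn D'

namespace IsSwapPartition

variable {K L : Type*} [Field K] [Field L] [Algebra K L] {g : L} {D D' : Set L}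

lemma symm (h : IsSwapPartition K g D D') : IsSwapPartition K g D' D where
  union_eq := by rw [Set.union_comm, h.union_eq]
  disjoint := h.disjoint.symm
  smul_mem_left := h.smul_mem_right
  smul_mem_right := h.smul_mem_left
  mul_mem_right := h.mul_mem_left
  mul_mem_left := h.mul_mem_right

lemma zero_notMem (h : IsSwapPartition K g D D') : (0 : L) ∉ D := fun h0 =>
  (h.union_eq.subset (Or.inl h0)) rfl

lemma mem_or_mem (h : IsSwapPartition K g D D') {x : L} (hx : x ≠ 0) : x ∈ D ∨ x ∈ D' :=
  h.union_eq.superset hx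

lemma ne_zero (h : IsSwapPartition K g D D') : g ≠ 0 := by
  rintro rfl
  rcases h.mem_or_mem one_ne_zero with h1 | h1
  · exact h.symm.zero_notMem (by simpa using h.mul_mem_right 1 h1)
  · exact h.zero_notMem (by simpa using h.mul_mem_left 1 h1)

lemma mul_mem_iff (h : IsSwapPartition K g D D') (w : L) : g * w ∈ D ↔ w ∈ D' := by
  refine ⟨fun hw => ?_, h.mul_mem_left w⟩
  have hw0 : w ≠ 0 := by
    rintro rfl
    exact h.zero_notMem (mul_zero g ▸ hw)
  exact (h.mem_or_mem hw0).resolve_left fun hD =>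
    h.disjoint.notMem_of_mem_left hw (h.mul_mem_right w hD)

lemma pow_mul_mem_iff (h : IsSwapPartition K g D D') (r : ℕ) (w : L) :
    g ^ r * w ∈ (if Even r then D' else D) ↔ w ∈ D' := by
  induction r generalizing D D' w with
  | zero => simp
  | succ r ih =>
    rw [pow_succ, mul_assoc, ← h.mul_mem_iff, ← ih h.symm]
    simp only [Nat.even_add_one, ite_not]

lemma signOf_of_mem (h : IsSwapPartition K g D D') {x : L} (hx : x ∈ D) : signOf D D' x = 1 := by
  simp [signOf, charFn, hx, h.disjoint.notMem_of_mem_left hx]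

lemma signOf_of_mem' (h : IsSwapPartition K g D D') {x : L} (hx : x ∈ D') :
    signOf D D' x = -1 := by
  simp [signOf, charFn, hx, h.disjoint.notMem_of_mem_right hx]

lemma signOf_zero (h : IsSwapPartition K g D D') : signOf D D' 0 = 0 := by
  simp [signOf, charFn, h.zero_notMem, h.symm.zero_notMem]

lemma signOf_eq_one_or_neg_one (h : IsSwapPartition K g D D') {x : L} (hx : x ≠ 0) :
    signOf D D' x = 1 ∨ signOf D D' x = -1 :=
  (h.mem_or_mem hx).imp h.signOf_of_mem h.signOf_of_mem'

lemma isAlternating_signOf (h : IsSwapPartition K g D D') :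
    IsAlternating K g (signOf D D') where
  ne_zero := h.ne_zero
  map_zero := h.signOf_zero
  map_smul k hk x := by
    rcases eq_or_ne x 0 with rfl | hx
    · rw [smul_zero]
    rcases h.mem_or_mem hx with hx | hx
    · rw [h.signOf_of_mem hx, h.signOf_of_mem (h.smul_mem_left k hk x hx)]
    · rw [h.signOf_of_mem' hx, h.signOf_of_mem' (h.smul_mem_right k hk x hx)]
  map_mul_left x := by
    rcases eq_or_ne x 0 with rfl | hx
    · rw [mul_zero, h.signOf_zero, neg_zero]
    rcases h.mem_or_mem hx with hx | hx
    · rw [h.signOf_of_mem hx, h.signOf_of_mem' (h.mul_mem_right x hx)]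
    · rw [h.signOf_of_mem' hx, h.signOf_of_mem (h.mul_mem_left x hx), neg_neg]

lemma charFn_eq [DecidableEq L] (h : IsSwapPartition K g D D') (x : L) :
    charFn D x = (1 - (if x = 0 then 1 else 0) + signOf D D' x) / 2 := by
  rcases eq_or_ne x 0 with rfl | hx
  · simp [charFn_of_notMem h.zero_notMem, h.signOf_zero]
  rcases h.mem_or_mem hx with hD | hD
  · simp [charFn_of_mem hD, h.signOf_of_mem hD, hx]
  · simp [charFn_of_notMem (h.disjoint.notMem_of_mem_right hD), h.signOf_of_mem' hD, hx]

end IsSwapPartition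

end SwapPartition

section GaussSums

lemma zetaP_pow_val (p : ℕ) [NeZero p] (u : ZMod p) : zetaP p ^ u.val = ZMod.stdAddChar u := by
  rw [ZMod.stdAddChar_apply, ZMod.toCircle_apply, zetaP, ← Complex.exp_nat_mul]
  congr 1
  ring

/-- The canonical additive character `ζ_p ^ Tr(x)` of a finite field of characteristic `p`, as an
`AddChar`. -/
def psiChar (p : ℕ) [Fact p.Prime] (K : Type*) [Field K] [CharP K p] : AddChar K ℂ :=
  letI : Algebra (ZMod p) K := ZMod.algebra K p
  ZMod.stdAddChar.compAddMonoidHom (Algebra.trace (ZMod p) K).toAddMonoidHom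

variable (p : ℕ) [Fact p.Prime]

lemma psiChar_ne_one (K : Type*) [Field K] [Finite K] [CharP K p] : psiChar p K ≠ 1 := by
  let _ : Algebra (ZMod p) K := ZMod.algebra K p
  intro h
  obtain ⟨k, hk⟩ := Algebra.trace_surjective (ZMod p) K 1
  have h1 : ZMod.stdAddChar (Algebra.trace (ZMod p) K k) = 1 := DFunLike.congr_fun h k
  rw [hk, ← (ZMod.stdAddChar (N := p)).map_zero_eq_one] at h1
  exact one_ne_zero (ZMod.injective_stdAddChar h1)

variable (K L : Type) [Field K] [Field L] [Fintype L] [Algebra K L] [CharP K p]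
  [CharP L p]

lemma psiL_eq_psiChar (x : L) : psiL p L x = psiChar p L x :=
  zetaP_pow_val p _

lemma psiL_eq_psiChar_trace [Finite K] (x : L) :
    psiL p L x = psiChar p K (Algebra.trace K L x) := by
  let _ : Algebra (ZMod p) K := ZMod.algebra K p
  let _ : Algebra (ZMod p) L := ZMod.algebra L p
  have : IsScalarTower (ZMod p) K L := IsScalarTower.of_algebraMap_eq' (Subsingleton.elim _ _)
  rw [psiL_eq_psiChar]
  change _ = ZMod.stdAddChar (Algebra.trace (ZMod p) K (Algebra.trace K L x))
  rw [Algebra.trace_trace]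
  rfl

lemma sum_psiL_mul [DecidableEq L] (z : L) :
    ∑ x, psiL p L (x * z) = if z = 0 then (Fintype.card L : ℂ) else 0 := by
  simp only [psiL_eq_psiChar]
  exact_mod_cast AddChar.sum_mulShift z (AddChar.IsPrimitive.of_ne_one (psiChar_ne_one p L))

variable {p K L} [Fintype K] [Algebra.IsQuadraticExtension K L] {g θ : L} {D D' : Set L}

lemma IsSwapPartition.sum_charFn_mul_psiL [DecidableEq L] (h : IsSwapPartition K g D D')
    (hθ : θ ≠ 0) (htr : Algebra.trace K L θ = 0) (z : L) :
    ∑ x, charFn D x * psiL p L (x * z) =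
      ((if z = 0 then (Fintype.card L : ℂ) else 0) - 1
        + Fintype.card K * signOf D D' (θ / z)) / 2 := by
  have hsign : ∑ x, signOf D D' x * psiL p L (x * z) = Fintype.card K * signOf D D' (θ / z) := by
    simp only [psiL_eq_psiChar_trace p K]
    exact h.isAlternating_signOf.sum_mul_addChar_trace hθ htr (psiChar_ne_one p K) z
  have hzero : psiL p L 0 = 1 := by rw [psiL_eq_psiChar, AddChar.map_zero_eq_one]
  simp only [h.charFn_eq, div_mul_eq_mul_div, add_mul, sub_mul, ← Finset.sum_div,
    Finset.sum_add_distrib, Finset.sum_sub_distrib, one_mul, ite_mul, zero_mul,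
    Finset.sum_ite_eq', Finset.mem_univ, if_true, sum_psiL_mul, hsign, hzero]

end GaussSums

section SpreadSets

variable {L : Type*} [Field L]

/-- The part of the spread components `K_y = {(x, x * y)}`, `y ∈ A`, with first coordinate
in `D`. -/
def spreadPart (D A : Set L) : Set (L × L) := {w | ∃ x ∈ D, ∃ y ∈ A, w = (x, x * y)}

/-- The copy of `D` on the vertical spread component `K_∞`. -/
def verticalPart (D : Set L) : Set (L × L) := {w | ∃ x ∈ D, w = ((0 : L), x)}

/-- The sets `C₁` and `C₃` of the paper, and `C₀` and `C₂` without their part on `K_∞`. -/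
def signedSpread (D D' S S' : Set L) : Set (L × L) :=
  spreadPart D (S \ S') ∪ spreadPart D' (S' \ S)

lemma spreadPart_eq_image (D A : Set L) :
    spreadPart D A = (fun w : L × L => (w.1, w.1 * w.2)) '' (D ×ˢ A) := by
  ext w
  simp [spreadPart, eq_comm, and_assoc]

lemma verticalPart_eq_image (D : Set L) : verticalPart D = Prod.mk (0 : L) '' D := by
  ext w
  simp [verticalPart, eq_comm]

lemma disjoint_spreadPart {D D' : Set L} (h : Disjoint D D') (A A' : Set L) :
    Disjoint (spreadPart D A) (spreadPart D' A') := by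
  rw [Set.disjoint_left]
  rintro _ ⟨x, hx, y, -, rfl⟩ ⟨x', hx', y', -, h'⟩
  obtain rfl : x = x' := congrArg Prod.fst h'
  exact h.notMem_of_mem_left hx hx'

lemma disjoint_spreadPart_verticalPart {D : Set L} (h : (0 : L) ∉ D) (A I : Set L) :
    Disjoint (spreadPart D A) (verticalPart I) := by
  rw [Set.disjoint_left]
  rintro _ ⟨x, hx, y, -, rfl⟩ ⟨x', -, h'⟩
  obtain rfl : x = 0 := congrArg Prod.fst h'
  exact h hx

end SpreadSets

section CharacterSums

variable {p : ℕ} {L : Type} [Field L] [Fintype L] [CharP L p]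

lemma psiSum_union {E E' : Set (L × L)} (h : Disjoint E E') (a b : L) :
    psiSum p L a b (E ∪ E') = psiSum p L a b E + psiSum p L a b E' :=
  finsum_mem_union h E.toFinite E'.toFinite

lemma psiSum_spreadPart {D : Set L} (hD : (0 : L) ∉ D) (A : Set L) (a b : L) :
    psiSum p L a b (spreadPart D A) =
      ∑ y, charFn A y * ∑ x, charFn D x * psiL p L (x * (a + b * y)) := by
  have hinj : Set.InjOn (fun w : L × L => (w.1, w.1 * w.2)) (D ×ˢ A) := by
    rintro ⟨x, y⟩ ⟨hx, -⟩ ⟨x', y'⟩ - h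
    obtain ⟨rfl, h⟩ := Prod.ext_iff.1 h
    exact Prod.ext rfl (mul_left_cancel₀ (ne_of_mem_of_not_mem hx hD) h)
  rw [psiSum, spreadPart_eq_image, finsum_mem_image hinj, finsum_mem_eq_sum_charFn_mul,
    Fintype.sum_prod_type_right]
  refine Finset.sum_congr rfl fun y _ => ?_
  rw [Finset.mul_sum]
  refine Finset.sum_congr rfl fun x _ => ?_
  have hprod : charFn (D ×ˢ A) (x, y) = charFn D x * charFn A y := by
    by_cases hx : x ∈ D <;> by_cases hy : y ∈ A <;> simp [charFn, hx, hy]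
  have harg : a * x + b * (x * y) = x * (a + b * y) := by ring
  rw [hprod, harg]
  ring

lemma psiSum_verticalPart_eq_sum (I : Set L) (a b : L) :
    psiSum p L a b (verticalPart I) = ∑ x, charFn I x * psiL p L (x * b) := by
  rw [psiSum, verticalPart_eq_image, finsum_mem_image (Prod.mk_right_injective 0).injOn,
    finsum_mem_eq_sum_charFn_mul]
  simp only [mul_zero, zero_add, mul_comm b]

lemma psiSum_zero_zero [Fact p.Prime] (E : Set (L × L)) : psiSum p L 0 0 E = E.ncard := by
  have hψ : psiL p L 0 = 1 := by rw [psiL_eq_psiChar, AddChar.map_zero_eq_one]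
  simp only [psiSum, zero_mul, add_zero, hψ, finsum_mem_eq_sum_charFn_mul, mul_one, sum_charFn]

lemma isTypeQ_of_psiSum [Fact p.Prime] {q : ℕ} {E : Set (L × L)}
    (h0 : psiSum p L 0 0 E = ((q : ℂ) ^ 4 - 1) / 4)
    (h : ∀ a b : L, (a, b) ≠ (0, 0) → psiSum p L a b E = ((q : ℂ) ^ 2 - 1) / 4 ∨
      psiSum p L a b E = (-3 * (q : ℂ) ^ 2 - 1) / 4) :
    IsTypeQ p q L E := by
  refine ⟨?_, h⟩
  have hcard : 4 * E.ncard + 1 = q ^ 4 := by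
    rw [psiSum_zero_zero] at h0
    have : 4 * (E.ncard : ℂ) + 1 = (q : ℂ) ^ 4 := by rw [h0]; ring
    exact_mod_cast this
  omega

end CharacterSums

section TraceSets

variable {K L : Type*} [Field K] [Field L] [Algebra K L]

/-- The sets `S₀` (for `c = 1`) and `S₁`, `S₁'` (for `c = ω ^ m`) of the paper. -/
def traceSet (c : L) (T : Set K) : Set L := {x | Algebra.trace K L (x * c) ∈ T}

lemma charFn_traceSet (c : L) (T : Set K) (y : L) :
    charFn (traceSet c T) y = charFn T (Algebra.trace K L (y * c)) := rfl

variable {g θ : L} {D D' : Set L}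

namespace IsSwapPartition

lemma notMem_range_algebraMap (h : IsSwapPartition K g D D') (k : K) : algebraMap K L k ≠ g := by
  rintro rfl
  have hk : k ≠ 0 := by
    rintro rfl
    exact h.ne_zero (map_zero _)
  have hsign := h.isAlternating_signOf.map_mul_left 1
  rw [← Algebra.smul_def, h.isAlternating_signOf.map_smul k hk] at hsign
  rcases h.signOf_eq_one_or_neg_one one_ne_zero with h1 | h1 <;> norm_num [h1] at hsign

variable [Algebra.IsQuadraticExtension K L]

/-- The kernels of `Tr` and of `Tr (· * g)` are lines, and they differ because `g ∉ K`. -/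
lemma bijective_trace_prod [Finite K] (h : IsSwapPartition K g D D') :
    Function.Bijective fun y : L => (Algebra.trace K L (y * 1), Algebra.trace K L (y * g)) := by
  let f : L →ₗ[K] K × K :=
    (Algebra.trace K L ∘ₗ LinearMap.mulRight K 1).prod (Algebra.trace K L ∘ₗ LinearMap.mulRight K g)
  have hfinrank : Module.finrank K L = Module.finrank K (K × K) := by
    rw [Algebra.IsQuadraticExtension.finrank_eq_two, Module.finrank_prod, Module.finrank_self]
  suffices hinj : Function.Injective f from
    ⟨hinj, (LinearMap.injective_iff_surjective_of_finrank_eq_finrank hfinrank).1 hinj⟩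
  refine (injective_iff_map_eq_zero f).2 fun y hy => ?_
  obtain ⟨hy1, hyg⟩ : Algebra.trace K L (y * 1) = 0 ∧ Algebra.trace K L (y * g) = 0 :=
    Prod.ext_iff.1 hy
  by_contra hy0
  rw [mul_one] at hy1
  obtain ⟨k, hk⟩ := exists_smul_eq_of_finrank_eq_two
    (Algebra.IsQuadraticExtension.finrank_eq_two K L) (Algebra.trace_ne_zero K L) hy0 hy1 hyg
  refine h.notMem_range_algebraMap k (mul_left_cancel₀ hy0 ?_)
  rw [← hk, Algebra.smul_def, mul_comm]

variable [Fintype K] [Fintype L]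

lemma sum_trace_prod (h : IsSwapPartition K g D D') (F : K → K → ℂ) :
    ∑ y, F (Algebra.trace K L (y * 1)) (Algebra.trace K L (y * g)) = ∑ k, ∑ k', F k k' := by
  rw [← Fintype.sum_prod_type']
  exact h.bijective_trace_prod.sum_comp fun w : K × K => F w.1 w.2

lemma sum_charFn_traceSet_sub (h : IsSwapPartition K g D D') (T T' : Set K) :
    ∑ y, (charFn (traceSet (1 : L) T) y - charFn (traceSet g T') y) =
      Fintype.card K * (T.ncard - T'.ncard) := by
  simp only [charFn_traceSet]
  rw [h.sum_trace_prod fun k k' => charFn T k - charFn T' k']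
  simp only [Finset.sum_sub_distrib, Finset.sum_const, Finset.card_univ, nsmul_eq_mul,
    ← Finset.mul_sum, sum_charFn]
  ring

lemma sum_charFn_traceSet_sub_sq (h : IsSwapPartition K g D D') (T T' : Set K) :
    ∑ y, (charFn (traceSet (1 : L) T) y - charFn (traceSet g T') y) ^ 2 =
      Fintype.card K * (T.ncard + T'.ncard) - 2 * T.ncard * T'.ncard := by
  have hsq (k k' : K) : (charFn T k - charFn T' k') ^ 2 =
      charFn T k + charFn T' k' - 2 * charFn T k * charFn T' k' := by
    rcases charFn_eq_zero_or_one T k with h | h <;>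
      rcases charFn_eq_zero_or_one T' k' with h' | h' <;> norm_num [h, h']
  simp only [charFn_traceSet]
  rw [h.sum_trace_prod fun k k' => (charFn T k - charFn T' k') ^ 2]
  simp only [hsq, Finset.sum_sub_distrib, Finset.sum_add_distrib, Finset.sum_const,
    Finset.card_univ, nsmul_eq_mul, ← Finset.mul_sum, ← Finset.sum_mul, sum_charFn]
  ring

lemma sum_charFn_traceSet_sub_mul_signOf (h : IsSwapPartition K g D D') (hθ : θ ≠ 0)
    (htr : Algebra.trace K L θ = 0) (T T' : Set K) (a : L) {b : L} (hb : b ≠ 0) :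
    ∑ y, (charFn (traceSet (1 : L) T) y - charFn (traceSet g T') y) *
        signOf D D' (θ / (a + b * y)) =
      signOf D D' b⁻¹ * (Fintype.card K * (charFn (traceSet 1 T) (-a / b)
        + charFn (traceSet g T') (-a / b)) - T.ncard - T'.ncard) := by
  have hη := h.isAlternating_signOf.comp_const_div θ
  have hg := h.ne_zero
  have hone : θ / (b * (θ / 1)) = b⁻¹ := by field_simp
  have hswap : signOf D D' (θ / (b * (θ / g))) = -signOf D D' b⁻¹ := by
    rw [← h.isAlternating_signOf.map_mul_left]
    congr 1
    field_simp
  simp only [charFn_traceSet, sub_mul, Finset.sum_sub_distrib]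
  rw [hη.sum_trace_mul_affine hθ htr one_ne_zero _ a hb, hη.sum_trace_mul_affine hθ htr hg _ a hb,
    sum_charFn, sum_charFn, hone, hswap]
  ring

end IsSwapPartition

end TraceSets

section TypeQ

/-- At `b ≠ 0` all the character sums have this shape, with `ε` the sign of `b⁻¹` and `u`, `v` the
values of the characteristic functions of `S` and `S'` at `-a / b`. -/
lemma typeQ_value_of_eq {z Q ε u v : ℂ} (hε : ε = 1 ∨ ε = -1) (hu : u = 0 ∨ u = 1)
    (hv : v = 0 ∨ v = 1)
    (hz : z = (Q * ((u - v) ^ 2 + ε * (u + v - 1)) - (Q + 1) / 2) / 2) :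
    z = (Q - 1) / 4 ∨ z = (-3 * Q - 1) / 4 := by
  subst hz
  rcases hε with rfl | rfl <;> rcases hu with rfl | rfl <;> rcases hv with rfl | rfl <;>
    first | (left; ring1) | (right; ring1)

lemma natCast_card_eq_card_sq (K L : Type*) [Field K] [Fintype K] [Field L] [Fintype L]
    [Algebra K L] [Algebra.IsQuadraticExtension K L] :
    (Fintype.card L : ℂ) = (Fintype.card K : ℂ) ^ 2 := by
  rw [Module.card_eq_pow_finrank (K := K), Algebra.IsQuadraticExtension.finrank_eq_two,
    Nat.cast_pow]

variable {K L : Type} [Field K] [Fintype K] [Field L] [Fintype L] [Algebra K L]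
  [Algebra.IsQuadraticExtension K L] {g θ : L} {D D' : Set L} {p : ℕ} [Fact p.Prime] [CharP K p]
  [CharP L p]

namespace IsSwapPartition

lemma psiSum_signedSpread [DecidableEq L] (h : IsSwapPartition K g D D') (hθ : θ ≠ 0)
    (htr : Algebra.trace K L θ = 0) (S S' : Set L) (a b : L) :
    psiSum p L a b (signedSpread D D' S S') =
      (∑ y, (charFn S y - charFn S' y) ^ 2 *
          ((if a + b * y = 0 then (Fintype.card L : ℂ) else 0) - 1)
        + Fintype.card K * ∑ y, (charFn S y - charFn S' y) *
          signOf D D' (θ / (a + b * y))) / 2 := by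
  have hsign (x : L) : signOf D' D x = -signOf D D' x := (neg_sub _ _).symm
  rw [signedSpread, psiSum_union (disjoint_spreadPart h.disjoint _ _),
    psiSum_spreadPart h.zero_notMem, psiSum_spreadPart h.symm.zero_notMem,
    ← Finset.sum_add_distrib, Finset.mul_sum, ← Finset.sum_add_distrib, Finset.sum_div]
  refine Finset.sum_congr rfl fun y _ => ?_
  rw [h.sum_charFn_mul_psiL hθ htr, h.symm.sum_charFn_mul_psiL hθ htr, hsign, charFn_sdiff,
    charFn_sdiff]
  rcases charFn_eq_zero_or_one S y with hS | hS <;>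
    rcases charFn_eq_zero_or_one S' y with hS' | hS' <;> rw [hS, hS'] <;> ring

lemma psiSum_verticalPart [DecidableEq L] (h : IsSwapPartition K g D D') (hθ : θ ≠ 0)
    (htr : Algebra.trace K L θ = 0) {I : Set L} (hI : ∀ w, θ * w ∈ I ↔ w ∈ D') (a b : L) :
    psiSum p L a b (verticalPart I) =
      ((if b = 0 then (Fintype.card L : ℂ) else 0) - 1
        - Fintype.card K * signOf D D' b⁻¹) / 2 := by
  have hchar (w : L) : charFn I (θ * w) = charFn D' w := by
    by_cases hw : w ∈ D' <;> simp [charFn, hI, hw]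
  have harg : θ / (θ * b) = b⁻¹ := by field_simp
  have hsign : signOf D' D b⁻¹ = -signOf D D' b⁻¹ := (neg_sub _ _).symm
  rw [psiSum_verticalPart_eq_sum, ← Equiv.sum_comp (Equiv.mulLeft₀ θ hθ)]
  simp only [Equiv.mulLeft₀_apply, hchar, mul_assoc, mul_left_comm θ]
  rw [h.symm.sum_charFn_mul_psiL hθ htr, harg, hsign]
  simp only [mul_eq_zero, hθ, false_or]
  ring

lemma psiSum_signedSpread_zero_right [DecidableEq L] (h : IsSwapPartition K g D D') (hθ : θ ≠ 0)
    (htr : Algebra.trace K L θ = 0) (T T' : Set K) (a : L) :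
    psiSum p L a 0 (signedSpread D D' (traceSet 1 T) (traceSet g T')) =
      (((if a = 0 then (Fintype.card L : ℂ) else 0) - 1) *
          (Fintype.card K * (T.ncard + T'.ncard) - 2 * T.ncard * T'.ncard)
        + Fintype.card K ^ 2 * signOf D D' (θ / a) * (T.ncard - T'.ncard)) / 2 := by
  rw [h.psiSum_signedSpread hθ htr]
  simp only [zero_mul, add_zero, ← Finset.sum_mul, h.sum_charFn_traceSet_sub_sq,
    h.sum_charFn_traceSet_sub]
  ring

lemma psiSum_signedSpread_of_ne_zero (h : IsSwapPartition K g D D') (hθ : θ ≠ 0)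
    (htr : Algebra.trace K L θ = 0) (T T' : Set K) (a : L) {b : L} (hb : b ≠ 0) :
    psiSum p L a b (signedSpread D D' (traceSet 1 T) (traceSet g T')) =
      (Fintype.card L * (charFn (traceSet 1 T) (-a / b) - charFn (traceSet g T') (-a / b)) ^ 2
        - (Fintype.card K * (T.ncard + T'.ncard) - 2 * T.ncard * T'.ncard)
        + Fintype.card K * signOf D D' b⁻¹ *
          (Fintype.card K * (charFn (traceSet 1 T) (-a / b) + charFn (traceSet g T') (-a / b))
            - T.ncard - T'.ncard)) / 2 := by
  classical
  have hroot (y : L) : a + b * y = 0 ↔ y = -a / b := by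
    rw [eq_div_iff hb, mul_comm y, add_comm, eq_neg_iff_add_eq_zero]
  rw [h.psiSum_signedSpread hθ htr, h.sum_charFn_traceSet_sub_mul_signOf hθ htr T T' a hb]
  simp only [mul_sub_one, Finset.sum_sub_distrib, h.sum_charFn_traceSet_sub_sq, hroot, mul_ite,
    mul_zero, Finset.sum_ite_eq', Finset.mem_univ, if_true]
  ring

theorem isTypeQ_signedSpread (h : IsSwapPartition K g D D') (hθ : θ ≠ 0)
    (htr : Algebra.trace K L θ = 0) {T T' : Set K} (hT : 2 * T.ncard + 1 = Fintype.card K)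
    (hT' : 2 * T'.ncard = Fintype.card K + 1) :
    IsTypeQ p (Fintype.card K) L (signedSpread D D' (traceSet 1 T) (traceSet g T')) := by
  classical
  have ht : (T.ncard : ℂ) = (Fintype.card K - 1) / 2 := by rw [← hT]; push_cast; ring
  have ht' : (T'.ncard : ℂ) = (Fintype.card K + 1) / 2 := by
    rw [eq_div_iff two_ne_zero, mul_comm]
    exact_mod_cast hT'
  refine isTypeQ_of_psiSum ?_ fun a b hab => ?_
  · rw [h.psiSum_signedSpread_zero_right hθ htr, ht, ht', div_zero, h.signOf_zero, if_pos rfl,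
      natCast_card_eq_card_sq K L]
    ring
  obtain rfl | hb := eq_or_ne b 0
  · have ha : a ≠ 0 := fun ha => hab (by rw [ha])
    rw [h.psiSum_signedSpread_zero_right hθ htr, ht, ht', if_neg ha]
    rcases h.signOf_eq_one_or_neg_one (div_ne_zero hθ ha) with hσ | hσ <;> rw [hσ]
    · right; ring
    · left; ring
  · refine typeQ_value_of_eq (h.signOf_eq_one_or_neg_one (inv_ne_zero hb))
      (charFn_eq_zero_or_one (traceSet 1 T) (-a / b))
      (charFn_eq_zero_or_one (traceSet g T') (-a / b)) (Q := (Fintype.card K : ℂ) ^ 2) ?_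
    rw [h.psiSum_signedSpread_of_ne_zero hθ htr T T' a hb, ht, ht',
      natCast_card_eq_card_sq K L]
    ring

theorem isTypeQ_signedSpread_union_verticalPart (h : IsSwapPartition K g D D') (hθ : θ ≠ 0)
    (htr : Algebra.trace K L θ = 0) {T T' : Set K} (hT : 2 * T.ncard + 1 = Fintype.card K)
    (hT' : 2 * T'.ncard + 1 = Fintype.card K) {I : Set L} (hI : ∀ w, θ * w ∈ I ↔ w ∈ D') :
    IsTypeQ p (Fintype.card K) L
      (signedSpread D D' (traceSet 1 T) (traceSet g T') ∪ verticalPart I) := by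
  classical
  have ht : (T.ncard : ℂ) = (Fintype.card K - 1) / 2 := by rw [← hT]; push_cast; ring
  have ht' : (T'.ncard : ℂ) = (Fintype.card K - 1) / 2 := by rw [← hT']; push_cast; ring
  have hdisj : Disjoint (signedSpread D D' (traceSet 1 T) (traceSet g T')) (verticalPart I) :=
    (disjoint_spreadPart_verticalPart h.zero_notMem _ _).union_left
      (disjoint_spreadPart_verticalPart h.symm.zero_notMem _ _)
  refine isTypeQ_of_psiSum ?_ fun a b hab => ?_
  · rw [psiSum_union hdisj, h.psiSum_signedSpread_zero_right hθ htr,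
      h.psiSum_verticalPart hθ htr hI, ht, ht', div_zero, inv_zero, h.signOf_zero, if_pos rfl,
      natCast_card_eq_card_sq K L]
    ring
  obtain rfl | hb := eq_or_ne b 0
  · have ha : a ≠ 0 := fun ha => hab (by rw [ha])
    left
    rw [psiSum_union hdisj, h.psiSum_signedSpread_zero_right hθ htr,
      h.psiSum_verticalPart hθ htr hI, ht, ht', inv_zero, h.signOf_zero, if_neg ha, if_pos rfl,
      natCast_card_eq_card_sq K L]
    ring
  · refine typeQ_value_of_eq (h.signOf_eq_one_or_neg_one (inv_ne_zero hb))
      (charFn_eq_zero_or_one (traceSet 1 T) (-a / b))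
      (charFn_eq_zero_or_one (traceSet g T') (-a / b)) (Q := (Fintype.card K : ℂ) ^ 2) ?_
    rw [psiSum_union hdisj, h.psiSum_signedSpread_of_ne_zero hθ htr T T' a hb,
      h.psiSum_verticalPart hθ htr hI, ht, ht', if_neg hb,
      natCast_card_eq_card_sq K L]
    ring

end IsSwapPartition

end TypeQ

section Spread

lemma two_mul_ncard_compl {K : Type*} [Fintype K] {T : Set K}
    (hT : 2 * T.ncard + 1 = Fintype.card K) : 2 * Tᶜ.ncard = Fintype.card K + 1 := by
  have := Set.ncard_add_ncard_compl T
  rw [Nat.card_eq_fintype_card] at this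
  omega

variable {K L : Type*} [Field K] [Field L] [Algebra K L] {g : L} {D D' : Set L}

lemma signedSpread_union_signedSpread (D D' S S' : Set L) :
    signedSpread D D' S S' ∪ signedSpread D' D S S' =
      spreadPart (D ∪ D') (S \ S' ∪ S' \ S) := by
  ext w
  simp only [signedSpread, spreadPart, Set.mem_union, Set.mem_ofPred_eq]
  grind

lemma spreadPart_compl_zero_union {A : Set L} (hA : A.Nonempty) :
    spreadPart {0}ᶜ A ∪ {(0, 0)} = ⋃ y ∈ A, {w : L × L | ∃ x, w = (x, x * y)} := by
  obtain ⟨y₀, hy₀⟩ := hA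
  ext w
  simp only [spreadPart, Set.mem_union, Set.mem_ofPred_eq, Set.mem_singleton_iff, Set.mem_compl_iff,
    Set.mem_iUnion₂]
  constructor
  · rintro (⟨x, -, y, hy, rfl⟩ | rfl)
    · exact ⟨y, hy, x, rfl⟩
    · exact ⟨y₀, hy₀, 0, by rw [zero_mul]⟩
  · rintro ⟨y, hy, x, rfl⟩
    rcases eq_or_ne x 0 with rfl | hx
    · exact Or.inr (by rw [zero_mul])
    · exact Or.inl ⟨x, hx, y, hy, rfl⟩

lemma spreadPart_union_verticalPart_compl_zero (A : Set L) :
    spreadPart {0}ᶜ A ∪ verticalPart {0}ᶜ ∪ {(0, 0)} =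
      (⋃ y ∈ A, {w : L × L | ∃ x, w = (x, x * y)}) ∪ {w | ∃ x, w = (0, x)} := by
  ext w
  simp only [spreadPart, verticalPart, Set.mem_union, Set.mem_ofPred_eq, Set.mem_singleton_iff,
    Set.mem_compl_iff, Set.mem_iUnion₂]
  constructor
  · rintro ((⟨x, -, y, hy, rfl⟩ | ⟨x, -, rfl⟩) | rfl)
    · exact Or.inl ⟨y, hy, x, rfl⟩
    · exact Or.inr ⟨x, rfl⟩
    · exact Or.inr ⟨0, rfl⟩
  · rintro (⟨y, hy, x, rfl⟩ | ⟨x, rfl⟩)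
    all_goals rcases eq_or_ne x 0 with rfl | hx
    · exact Or.inr (by rw [zero_mul])
    · exact Or.inl (Or.inl ⟨x, hx, y, hy, rfl⟩)
    · exact Or.inr rfl
    · exact Or.inl (Or.inr ⟨x, hx, rfl⟩)

namespace IsSwapPartition

lemma iUnion_spread_eq (h : IsSwapPartition K g D D') {S S' : Set L}
    (hA : (S \ S' ∪ S' \ S).Nonempty) :
    signedSpread D D' S S' ∪ signedSpread D' D S S' ∪ {(0, 0)} =
      ⋃ y ∈ S \ S' ∪ S' \ S, {w : L × L | ∃ x, w = (x, x * y)} := by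
  rw [signedSpread_union_signedSpread, h.union_eq, spreadPart_compl_zero_union hA]

lemma iUnion_spread_union_vertical_eq (h : IsSwapPartition K g D D') (S S' : Set L)
    {I I' : Set L} (hI : I ∪ I' = {0}ᶜ) :
    signedSpread D D' S S' ∪ verticalPart I ∪ (signedSpread D' D S S' ∪ verticalPart I') ∪
        {(0, 0)} =
      (⋃ y ∈ S \ S' ∪ S' \ S, {w : L × L | ∃ x, w = (x, x * y)}) ∪ {w | ∃ x, w = (0, x)} := by
  have hvert : verticalPart I ∪ verticalPart I' = verticalPart {0}ᶜ := by
    rw [verticalPart_eq_image, verticalPart_eq_image, verticalPart_eq_image, ← Set.image_union, hI]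
  rw [Set.union_union_union_comm, signedSpread_union_signedSpread, h.union_eq, hvert,
    spreadPart_union_verticalPart_compl_zero]

lemma sdiff_traceSet_nonempty [Finite K] [Algebra.IsQuadraticExtension K L]
    (h : IsSwapPartition K g D D') {T T' : Set K} (hT : T.Nonempty) (hT' : T'.Nonempty) :
    (traceSet (1 : L) T \ traceSet g T'ᶜ).Nonempty := by
  obtain ⟨k, hk⟩ := hT
  obtain ⟨k', hk'⟩ := hT'
  obtain ⟨y, hy⟩ := h.bijective_trace_prod.surjective (k, k')
  obtain ⟨rfl, rfl⟩ := Prod.ext_iff.1 hy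
  exact ⟨y, hk, not_not_intro hk'⟩

end IsSwapPartition

end Spread

section Cyclotomy

lemma IsPrim.ne_zero {L : Type} [Field L] [Fintype L] {ω : L} (hω : IsPrim L ω)
    (hL : 2 < Fintype.card L) : ω ≠ 0 := by
  classical
  rintro rfl
  obtain ⟨x, -, hx⟩ := Finset.exists_mem_notMem_of_card_lt_card
    (s := ({0, 1} : Finset L)) (Finset.card_le_two.trans_lt hL)
  obtain ⟨hx0, hx1⟩ : x ≠ 0 ∧ x ≠ 1 := by simpa using hx
  obtain ⟨n, rfl⟩ := hω x hx0
  rcases n with _ | n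
  · exact hx1 (pow_zero 0)
  · exact hx0 (zero_pow n.succ_ne_zero)

lemma IsPrim.isPrimitiveRoot {L : Type} [Field L] [Fintype L] {ω : L} (hω : IsPrim L ω)
    (hL : 2 < Fintype.card L) : IsPrimitiveRoot ω (Fintype.card L - 1) := by
  classical
  let u : Lˣ := Units.mk0 ω (hω.ne_zero hL)
  have hu : orderOf u = Nat.card Lˣ := orderOf_eq_card_of_forall_mem_zpowers fun x => by
    obtain ⟨n, hn⟩ := hω x x.ne_zero
    exact ⟨n, Units.ext (by simpa [u] using hn.symm)⟩
  rw [Nat.card_eq_fintype_card, Fintype.card_units, ← orderOf_units] at hu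
  exact hu ▸ IsPrimitiveRoot.orderOf ω

/-- The union of the cyclotomic classes `C_j` of order `N` with respect to `ω`, for `j ∈ J`. -/
def cycUnion {L : Type*} [Monoid L] (ω : L) (N : ℕ) (J : Set (ZMod N)) : Set L :=
  {x | ∃ n : ℕ, x = ω ^ n ∧ (n : ZMod N) ∈ J}

section Monoid

variable {L : Type*} [CommMonoid L] {ω : L} {d N : ℕ} {J : Set (ZMod N)}

lemma cycUnion_iUnion {ι : Type*} (s : Set ι) (f : ι → ZMod N) :
    ⋃ i ∈ s, cycUnion ω N {f i} = cycUnion ω N (f '' s) := by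
  ext x
  simp only [cycUnion, Set.mem_iUnion₂, Set.mem_ofPred_eq, Set.mem_singleton_iff, Set.mem_image]
  grind

lemma pow_mem_cycUnion_iff (hω : IsPrimitiveRoot ω d) (hd : d ≠ 0) (hN : N ∣ d) (n : ℕ) :
    ω ^ n ∈ cycUnion ω N J ↔ (n : ZMod N) ∈ J := by
  refine ⟨fun ⟨k, hk, hJ⟩ => ?_, fun hJ => ⟨n, rfl, hJ⟩⟩
  rw [(hω.isOfFinOrder hd).pow_eq_pow_iff_modEq, ← hω.eq_orderOf] at hk
  rwa [(ZMod.natCast_eq_natCast_iff _ _ _).2 (hk.of_dvd hN)]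

lemma pow_mul_mem_cycUnion {k : ℕ} {J' : Set (ZMod N)} (hJ : ∀ j ∈ J, (k + j : ZMod N) ∈ J')
    {x : L} (hx : x ∈ cycUnion ω N J) : ω ^ k * x ∈ cycUnion ω N J' := by
  obtain ⟨n, rfl, hn⟩ := hx
  exact ⟨k + n, (pow_add ω k n).symm, by simpa only [Nat.cast_add] using hJ _ hn⟩

lemma disjoint_cycUnion_compl (hω : IsPrimitiveRoot ω d) (hd : d ≠ 0) (hN : N ∣ d) :
    Disjoint (cycUnion ω N J) (cycUnion ω N Jᶜ) := by
  rw [Set.disjoint_left]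
  rintro _ ⟨n, rfl, hn⟩ hn'
  exact (pow_mem_cycUnion_iff hω hd hN n).1 hn' hn

end Monoid

section AddGroup

variable {G : Type*} [AddGroup G] [Finite G] {J : Set G} {a : G}

lemma add_right_mem_iff_of_two_mul_ncard_eq (hcard : 2 * J.ncard = Nat.card G)
    (hJ : ∀ x ∈ J, x + a ∉ J) (x : G) : x + a ∈ J ↔ x ∉ J := by
  have hpre : ((· + a) ⁻¹' J).ncard = J.ncard :=
    Set.ncard_preimage_of_injective_subset_range (add_left_injective a)
      fun y _ => ⟨y - a, sub_add_cancel y a⟩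
  have hcompl := Set.ncard_add_ncard_compl ((· + a) ⁻¹' J)
  have heq : J = ((· + a) ⁻¹' J)ᶜ := Set.eq_of_subset_of_ncard_le hJ (by omega)
  rw [← Set.mem_preimage (f := (· + a)), ← Set.notMem_compl_iff, ← heq]

end AddGroup

section ZMod

variable {m : ℕ} {s : Finset ℕ}

lemma add_half_mem_image_natCast_iff (hs : ∀ k ∈ s, k < 2 * m) (hcard : s.card = m)
    (hdisj : ∀ k ∈ s, (k + m) % (2 * m) ∉ s) (hm : m ≠ 0) (x : ZMod (2 * m)) :
    x + (m : ZMod (2 * m)) ∈ ((↑) '' (s : Set ℕ) : Set (ZMod (2 * m))) ↔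
      x ∉ ((↑) '' (s : Set ℕ) : Set (ZMod (2 * m))) := by
  have : NeZero (2 * m) := ⟨by omega⟩
  refine add_right_mem_iff_of_two_mul_ncard_eq ?_ ?_ x
  · rw [Set.InjOn.ncard_image, Set.ncard_coe_finset, hcard, Nat.card_zmod]
    intro i hi j hj hij
    exact Nat.ModEq.eq_of_lt_of_lt ((ZMod.natCast_eq_natCast_iff _ _ _).1 hij) (hs i hi) (hs j hj)
  · rintro _ ⟨k, hk, rfl⟩ ⟨j, hj, hjk⟩
    rw [← Nat.cast_add, ZMod.natCast_eq_natCast_iff'] at hjk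
    rw [Nat.mod_eq_of_lt (hs j hj)] at hjk
    exact hdisj k hk (hjk ▸ hj)

end ZMod

section Field

variable {L : Type} [Field L] {ω : L} {d N : ℕ}

lemma cyc_eq_cycUnion (hω : ω ^ d = 1) (hd : d ≠ 0) (hN : N ∣ d) (i : ℕ) :
    cyc L ω N i = cycUnion ω N {(i : ZMod N)} := by
  ext x
  constructor
  · rintro ⟨k, rfl⟩
    exact ⟨i + N * k, by rw [pow_add, pow_mul], by simp⟩
  · rintro ⟨n, rfl, hn⟩
    -- `n + i * d` is an exponent of the same power that is at least `i`.
    have hle : i ≤ n + i * d :=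
      (Nat.le_mul_of_pos_right i (Nat.pos_of_ne_zero hd)).trans le_add_self
    have hmod : i ≡ n + i * d [MOD N] := by
      have hn' := (ZMod.natCast_eq_natCast_iff _ _ _).1 (Set.mem_singleton_iff.1 hn).symm
      simpa only [add_zero] using
        hn'.add (Nat.modEq_zero_iff_dvd.2 (hN.mul_left i)).symm
    obtain ⟨k, hk⟩ := (Nat.modEq_iff_dvd' hle).1 hmod
    refine ⟨k, ?_⟩
    rw [← pow_mul, ← pow_add, ← hk, Nat.add_sub_cancel' hle, pow_add, mul_comm i, pow_mul, hω,
      one_pow, mul_one]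

lemma IsPrim.cycUnion_union_compl (hω : IsPrim L ω) (h0 : ω ≠ 0) (J : Set (ZMod N)) :
    cycUnion ω N J ∪ cycUnion ω N Jᶜ = {0}ᶜ := by
  ext x
  constructor
  · rintro (⟨n, rfl, -⟩ | ⟨n, rfl, -⟩) <;> exact pow_ne_zero n h0
  · intro hx
    obtain ⟨n, rfl⟩ := hω x hx
    exact (em ((n : ZMod N) ∈ J)).imp (fun h => ⟨n, rfl, h⟩) (fun h => ⟨n, rfl, h⟩)

end Field

lemma trace_eq_zero_of_pow_card_sub_one_eq_neg_one {K L : Type*} [Field K] [Fintype K]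
    [Field L] [Finite L] [Algebra K L] [Algebra.IsQuadraticExtension K L] {θ : L}
    (hθ : θ ^ (Fintype.card K - 1) = -1) : Algebra.trace K L θ = 0 := by
  apply (algebraMap K L).injective
  rw [map_zero, FiniteField.algebraMap_trace_eq_sum_pow,
    Algebra.IsQuadraticExtension.finrank_eq_two, Finset.sum_range_succ, Finset.sum_range_one,
    pow_zero, pow_one, pow_one, Nat.card_eq_fintype_card, ← Nat.sub_add_cancel Fintype.card_pos,
    pow_succ, hθ, neg_one_mul, add_neg_cancel]

section QuadraticExtension

variable {K L : Type} [Field K] [Fintype K] [Field L] [Fintype L] [Algebra K L] {ω : L} {m : ℕ}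

lemma isQuadraticExtension_of_card (hL : Fintype.card L = Fintype.card K ^ 2) :
    Algebra.IsQuadraticExtension K L where
  finrank_eq_two' := by
    rw [Module.card_eq_pow_finrank (K := K)] at hL
    exact Nat.pow_right_injective Fintype.one_lt_card hL

lemma IsPrim.isPrimitiveRoot_of_card_eq_sq (hω : IsPrim L ω) {q : ℕ} (hq : 1 < q)
    (hL : Fintype.card L = q ^ 2) : IsPrimitiveRoot ω ((q + 1) * (q - 1)) := by
  rw [← Nat.sq_sub_sq, one_pow, ← hL]
  exact hω.isPrimitiveRoot (by nlinarith)

lemma IsPrim.exists_algebraMap_eq_pow (hω : IsPrim L ω)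
    (hL : Fintype.card L = Fintype.card K ^ 2) {k : K} (hk : k ≠ 0) :
    ∃ n, Fintype.card K + 1 ∣ n ∧ algebraMap K L k = ω ^ n := by
  obtain ⟨n, hn⟩ := hω (algebraMap K L k) ((map_ne_zero _).2 hk)
  refine ⟨n, ?_, hn⟩
  have hpow : ω ^ (n * (Fintype.card K - 1)) = 1 := by
    rw [pow_mul, ← hn, ← map_pow, FiniteField.pow_card_sub_one_eq_one k hk, map_one]
  rw [(hω.isPrimitiveRoot_of_card_eq_sq Fintype.one_lt_card hL).pow_eq_one_iff_dvd] at hpow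
  exact Nat.dvd_of_mul_dvd_mul_right (Nat.sub_pos_of_lt Fintype.one_lt_card) hpow

lemma IsPrim.smul_mem_cycUnion (hω : IsPrim L ω) (hL : Fintype.card L = Fintype.card K ^ 2)
    {N : ℕ} (hN : N ∣ Fintype.card K + 1) {J : Set (ZMod N)} (k : K) (hk : k ≠ 0) (x : L)
    (hx : x ∈ cycUnion ω N J) : k • x ∈ cycUnion ω N J := by
  obtain ⟨n, hn, hkn⟩ := hω.exists_algebraMap_eq_pow hL hk
  rw [Algebra.smul_def, hkn]
  refine pow_mul_mem_cycUnion (fun j hj => ?_) hx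
  rwa [(ZMod.natCast_eq_zero_iff n N).2 (hN.trans hn), zero_add]

lemma IsPrim.isSwapPartition_cycUnion (hω : IsPrim L ω)
    (hL : Fintype.card L = Fintype.card K ^ 2) {N : ℕ} (hN : N ∣ Fintype.card K + 1)
    {J : Set (ZMod N)} (hJ : ∀ x, x + (m : ZMod N) ∈ J ↔ x ∉ J) :
    IsSwapPartition K (ω ^ m) (cycUnion ω N J) (cycUnion ω N Jᶜ) :=
  have hd : (Fintype.card K + 1) * (Fintype.card K - 1) ≠ 0 :=
    mul_ne_zero (Nat.succ_ne_zero _) (Nat.sub_pos_of_lt Fintype.one_lt_card).ne'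
  have hroot := hω.isPrimitiveRoot_of_card_eq_sq Fintype.one_lt_card hL
  { union_eq := hω.cycUnion_union_compl (hroot.ne_zero hd) J
    disjoint := disjoint_cycUnion_compl hroot hd (hN.mul_right _)
    smul_mem_left := hω.smul_mem_cycUnion hL hN
    smul_mem_right := hω.smul_mem_cycUnion hL hN
    mul_mem_right := fun _ => pow_mul_mem_cycUnion fun j hj => by
      rw [Set.mem_compl_iff, add_comm, hJ]
      exact not_not_intro hj
    mul_mem_left := fun _ => pow_mul_mem_cycUnion fun j hj => by
      rwa [add_comm, hJ] }

theorem IsPrim.isSwapPartition_iUnion_cyc (hω : IsPrim L ω)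
    (hL : Fintype.card L = Fintype.card K ^ 2) (hm : m ≠ 0) (hdvd : 2 * m ∣ Fintype.card K + 1)
    {s : Finset ℕ} (hs : ∀ k ∈ s, k < 2 * m) (hcard : s.card = m)
    (hdisj : ∀ k ∈ s, (k + m) % (2 * m) ∉ s) :
    IsSwapPartition K (ω ^ m) (⋃ i ∈ s, cyc L ω (2 * m) i) (⋃ i ∈ s, cyc L ω (2 * m) (i + m)) := by
  have hd : (Fintype.card K + 1) * (Fintype.card K - 1) ≠ 0 :=
    mul_ne_zero (Nat.succ_ne_zero _) (Nat.sub_pos_of_lt Fintype.one_lt_card).ne'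
  have hroot := hω.isPrimitiveRoot_of_card_eq_sq Fintype.one_lt_card hL
  have hJ := add_half_mem_image_natCast_iff hs hcard hdisj hm
  have hcompl : (fun i : ℕ => ((i + m : ℕ) : ZMod (2 * m))) '' s =
      ((↑) '' (s : Set ℕ) : Set (ZMod (2 * m)))ᶜ := by
    ext x
    rw [Set.mem_compl_iff, ← sub_add_cancel x (m : ZMod (2 * m)), hJ, not_not]
    simp only [Set.mem_image, Nat.cast_add, add_left_inj, eq_sub_iff_add_eq]
  simp only [cyc_eq_cycUnion hroot.pow_eq_one hd (hdvd.mul_right _)]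
  rw [← Finset.set_biUnion_coe, ← Finset.set_biUnion_coe, cycUnion_iUnion,
    cycUnion_iUnion, hcompl]
  exact hω.isSwapPartition_cycUnion hL hdvd hJ

lemma IsPrim.trace_pow_pow_eq_zero (hω : IsPrim L ω) (hL : Fintype.card L = Fintype.card K ^ 2)
    (hdvd : 2 * m ∣ Fintype.card K + 1) :
    Algebra.trace K L ((ω ^ m) ^ ((Fintype.card K + 1) / (2 * m))) = 0 := by
  have := isQuadraticExtension_of_card hL
  have hhalf : 2 * (m * ((Fintype.card K + 1) / (2 * m))) = Fintype.card K + 1 := by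
    rw [← mul_assoc, Nat.mul_div_cancel' hdvd]
  have hq : 0 < Fintype.card K - 1 := Nat.sub_pos_of_lt Fintype.one_lt_card
  refine trace_eq_zero_of_pow_card_sub_one_eq_neg_one ?_
  rw [← pow_mul ω, ← pow_mul]
  exact ((hω.isPrimitiveRoot_of_card_eq_sq Fintype.one_lt_card hL).pow (by positivity)
    (by rw [mul_right_comm, mul_comm _ 2, hhalf])).eq_neg_one_of_two_right

end QuadraticExtension

lemma even_pow_add_one_div_iff {P m t : ℕ} (hm : 0 < m) (hP : 2 * m ∣ P + 1)
    (hPt : 2 * m ∣ P ^ t + 1) :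
    Even ((P ^ t + 1) / (2 * m)) ↔ Even ((P + 1) / (2 * m)) ∧ Odd t := by
  have hodd : Odd P := by
    have := (Nat.dvd_mul_right 2 m).trans hP
    rw [Nat.odd_iff]
    omega
  have hsq : P ^ 2 ≡ 1 [MOD 2 * m * 2] := by
    refine ((Nat.modEq_iff_dvd' (Nat.one_le_pow _ _ hodd.pos)).2 ?_).symm
    rw [← one_pow 2, Nat.sq_sub_sq]
    exact mul_dvd_mul hP (Nat.Odd.sub_odd hodd odd_one).two_dvd
  rw [even_iff_two_dvd, even_iff_two_dvd, Nat.dvd_div_iff_mul_dvd hPt, Nat.dvd_div_iff_mul_dvd hP]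
  rcases Nat.even_or_odd' t with ⟨k, rfl | rfl⟩
  · have hpow : P ^ (2 * k) + 1 ≡ 2 [MOD 2 * m * 2] := by
      simpa only [pow_mul, one_pow] using (hsq.pow k).add_right 1
    refine iff_of_false (fun h => ?_) (fun h => Nat.not_odd_iff_even.2 (even_two_mul k) h.2)
    have := Nat.le_of_dvd two_pos ((hpow.dvd_iff dvd_rfl).1 h)
    omega
  · have hpow : P ^ (2 * k + 1) + 1 ≡ P + 1 [MOD 2 * m * 2] := by
      simpa only [pow_succ, pow_mul, one_pow, one_mul] using ((hsq.pow k).mul_right P).add_right 1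
    rw [hpow.dvd_iff dvd_rfl, and_iff_left (odd_two_mul_add_one k)]

end Cyclotomy

/-- Corollary 3.8: the four sets `C₀, C₁, C₂, C₃` are of type Q and fit the
spread `{K_y} ∪ {K_∞}`. -/
theorem semiprimitive_typeQ_spread
    (p s q m l t : ℕ) (hp : p.Prime) (hpodd : p ≠ 2) (hs : 0 < s) (hq : q = p ^ s)
    (hm : 0 < m) (hdvd : 2 * m ∣ q + 1)
    (hl : 0 < l) (hldvd : 2 * m ∣ p ^ l + 1)
    (hlmin : ∀ l', 0 < l' → 2 * m ∣ p ^ l' + 1 → l ≤ l')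
    (ht : s = l * t)
    (K L : Type) [Field K] [Fintype K] [Field L] [Fintype L] [Algebra K L] [CharP L p]
    (hK : Fintype.card K = q) (hL : Fintype.card L = q ^ 2)
    (ω : L) (hω : IsPrim L ω)
    (Kst : Finset ℕ) (hKsub : ∀ k ∈ Kst, k < 2 * m) (hKcard : Kst.card = m)
    (hKdisj : ∀ k ∈ Kst, (k + m) % (2 * m) ∉ Kst)
    (D₀ D₁ : Set L)
    (hD₀ : D₀ = ⋃ i ∈ Kst, cyc L ω (2 * m) i)
    (hD₁ : D₁ = ⋃ i ∈ Kst, cyc L ω (2 * m) (i + m))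
    (T₀ T₁ : Set K)
    (S₀ S₁ : Set L)
    (hS₀ : S₀ = {x : L | Algebra.trace K L x ∈ T₀})
    (hS₁ : S₁ = {x : L | Algebra.trace K L (x * ω ^ m) ∈ T₁})
    (ε : ℕ) (hε : ε = if Even ((p ^ l + 1) / (2 * m)) ∧ Odd t then 1 else 0)
    (Dε : Set L) (hDε : Dε = if ε = 0 then D₀ else D₁)
    (A₀ A₁ : Set L) (hA₀ : A₀ = S₀ \ S₁) (hA₁ : A₁ = S₁ \ S₀)
    (hT₀ : T₀.ncard = (q - 1) / 2) (hT₁ : T₁.ncard = (q - 1) / 2)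
    (Dε' : Set L) (hDε' : Dε' = if ε = 0 then D₁ else D₀)
    (S₁' A₀' A₁' : Set L)
    (hS₁' : S₁' = {x : L | Algebra.trace K L (x * ω ^ m) ∈ Set.univ \ T₁})
    (hA₀' : A₀' = S₀ \ S₁') (hA₁' : A₁' = S₁' \ S₀)
    (C₀ C₁ C₂ C₃ : Set (L × L))
    (hC₀ : C₀ = {w | ∃ x ∈ D₀, ∃ y ∈ A₀, w = (x, x * y)} ∪
      {w | ∃ x ∈ D₁, ∃ y ∈ A₁, w = (x, x * y)} ∪
      {w | ∃ x ∈ Dε, w = ((0 : L), x)})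
    (hC₁ : C₁ = {w | ∃ x ∈ D₀, ∃ y ∈ A₀', w = (x, x * y)} ∪
      {w | ∃ x ∈ D₁, ∃ y ∈ A₁', w = (x, x * y)})
    (hC₂ : C₂ = {w | ∃ x ∈ D₁, ∃ y ∈ A₀, w = (x, x * y)} ∪
      {w | ∃ x ∈ D₀, ∃ y ∈ A₁, w = (x, x * y)} ∪
      {w | ∃ x ∈ Dε', w = ((0 : L), x)})
    (hC₃ : C₃ = {w | ∃ x ∈ D₁, ∃ y ∈ A₀', w = (x, x * y)} ∪
      {w | ∃ x ∈ D₀, ∃ y ∈ A₁', w = (x, x * y)})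
    (Ky : L → Set (L × L)) (hKy : ∀ y, Ky y = {w | ∃ x : L, w = (x, x * y)})
    (Kinf : Set (L × L)) (hKinf : Kinf = {w | ∃ x : L, w = ((0 : L), x)})
    : (IsTypeQ p q L C₀ ∧ IsTypeQ p q L C₁ ∧ IsTypeQ p q L C₂ ∧ IsTypeQ p q L C₃) ∧
      C₀ ∪ C₂ ∪ {((0 : L), (0 : L))} = (⋃ y ∈ A₀ ∪ A₁, Ky y) ∪ Kinf ∧
      C₁ ∪ C₃ ∪ {((0 : L), (0 : L))} = ⋃ y ∈ A₀' ∪ A₁', Ky y := by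
  have : Fact p.Prime := ⟨hp⟩
  have : CharP K p := (RingHom.charP_iff _ (algebraMap K L).injective p).2 inferInstance
  have hcard (T : Set K) (hT : T.ncard = (q - 1) / 2) : 2 * T.ncard + 1 = q := by
    grind [(hp.odd_of_ne_two hpodd).pow (n := s)]
  have hparity := even_pow_add_one_div_iff (t := t) hm hldvd (by rwa [← pow_mul, ← ht, ← hq])
  rw [← pow_mul, ← ht, ← hq] at hparity
  obtain rfl : S₀ = traceSet 1 T₀ := by simp only [hS₀, traceSet, mul_one]
  obtain rfl : S₁' = traceSet (ω ^ m) T₁ᶜ := by rw [hS₁', ← Set.compl_eq_univ_sdiff]; rfl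
  obtain rfl : Ky = fun y => {w | ∃ x, w = (x, x * y)} := funext hKy
  subst hK hS₁ hA₀ hA₁ hA₀' hA₁' hC₀ hC₁ hC₂ hC₃ hKinf
  have := isQuadraticExtension_of_card hL
  have h : IsSwapPartition K (ω ^ m) D₀ D₁ :=
    hD₀ ▸ hD₁ ▸ hω.isSwapPartition_iUnion_cyc hL hm.ne' hdvd hKsub hKcard hKdisj
  have htr := hω.trace_pow_pow_eq_zero hL hdvd
  have hθ := pow_ne_zero ((Fintype.card K + 1) / (2 * m)) h.ne_zero
  replace hDε : Dε = if Even ((Fintype.card K + 1) / (2 * m)) then D₁ else D₀ := by grind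
  replace hDε' : Dε' = if Even ((Fintype.card K + 1) / (2 * m)) then D₀ else D₁ := by grind
  have h₀ := hcard T₀ hT₀
  have h₁ := hcard T₁ hT₁
  have hne : T₀.Nonempty ∧ T₁.Nonempty := by
    grind [Set.nonempty_of_ncard_ne_zero, Fintype.one_lt_card (α := K)]
  exact ⟨⟨h.isTypeQ_signedSpread_union_verticalPart hθ htr h₀ h₁ (hDε ▸ h.pow_mul_mem_iff _),
      h.isTypeQ_signedSpread hθ htr h₀ (two_mul_ncard_compl h₁),
      h.symm.isTypeQ_signedSpread_union_verticalPart hθ htr h₀ h₁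
        (hDε' ▸ h.symm.pow_mul_mem_iff _),
      h.symm.isTypeQ_signedSpread hθ htr h₀ (two_mul_ncard_compl h₁)⟩,
    h.iUnion_spread_union_vertical_eq _ _ (by grind [h.union_eq]),
    h.iUnion_spread_eq (h.sdiff_traceSet_nonempty hne.1 hne.2).inl⟩

end
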